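/- Let n ≥ 1, σ > 0 and β ≥ 0. There exists C > 0 such that for all (x,y) in the region Ñ = {(x,y) ∈ ℝⁿ×ℝⁿ : |x-y| < 2n(n+3)/(1+|x|+|y|)} with x ≠ y, (∫_0^∞ |𝓗_{β,σ}(x,y,t)|² dt/t)^{1/2} ≤ C (1+|x|^{1/2})/|x-y|^{n-1/2}, where 𝓗_{β,σ}(x,y,t) = (t^σ/√(4π)) ∫_0^∞ u^{-3/2} ∂_t^σ[t e^{-t²/(4u)}] (e^{-βu} - 1) W_u^{-Δ}(x-y) du. -/

import Mathlib

/-!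
Write `r = |x-y|`. The left-hand side is in fact at most `C / r^{n-1/2}`.

By scaling, the `m`-th derivative of `t e^{-t²/(4u)}` is at most `C u^{(1-m)/2} e^{-t²/(8u)}`, and
hence `|∂_t^σ[t e^{-t²/(4u)}]| ≤ C u^{(1-σ)/2} e^{-t²/(8u)}` (`fracDeriv_bound`). Combined with
`|e^{-βu} - 1| ≤ (βu)^{1/4}`, the integral in `u` is dominated by a Gamma integral in `1/u`, so that
`|𝓗(x,y,t)| ≤ C t^σ (t² + r²)^{-p}` with `p = (σ+n)/2 - 1/4` (`HcalKernel_pointwise`). Finally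
`∫ t^{2σ-1} (t² + r²)^{-2p} dt = C r^{2σ-4p} = C r^{-2(n-1/2)}`, which converges because `σ > 0` and
`n > 1/2` (`radial_scaling`).

All the dominating functions are integrable, so the domination of Bochner integrals needs no
measurability of the kernel itself.
-/

open Real MeasureTheory

/-- `m σ = ⌊σ⌋ + 1`, the smallest integer strictly greater than `σ > 0`. -/
noncomputable def mIdx (σ : ℝ) : ℕ := ⌊σ⌋₊ + 1

/-- The σ-th fractional derivative in `t` of a function `F : (0,∞) → ℂ`. -/
noncomputable def fracDeriv (σ : ℝ) (F : ℝ → ℂ) (t : ℝ) : ℂ :=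
  Complex.exp (-(Complex.I * (Real.pi : ℂ) * (((mIdx σ : ℝ) - σ : ℝ) : ℂ))) /
      Complex.Gamma (((mIdx σ : ℝ) - σ : ℝ) : ℂ) *
    ∫ s in Set.Ioi (0 : ℝ), iteratedDeriv (mIdx σ) F (t + s) * ((s ^ ((mIdx σ : ℝ) - σ - 1) : ℝ) : ℂ)

/-- The Euclidean heat kernel `W_u^{-Δ}(z) = (4πu)^{-n/2} e^{-|z|²/(4u)}` on `ℝⁿ`. -/
noncomputable def euclidHeat (n : ℕ) (u : ℝ) (z : EuclideanSpace ℝ (Fin n)) : ℝ :=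
  (4 * Real.pi * u) ^ (-(n : ℝ) / 2) * Real.exp (-‖z‖ ^ 2 / (4 * u))

/-- The kernel `𝓗_{β,σ}(x,y,t) = (t^σ/√(4π)) ∫_0^∞ u^{-3/2} ∂_t^σ[te^{-t²/(4u)}]
(e^{-βu}-1) W_u^{-Δ}(x-y) du`. -/
noncomputable def HcalKernel (n : ℕ) (β σ : ℝ)
    (x y : EuclideanSpace ℝ (Fin n)) (t : ℝ) : ℂ :=
  ((t ^ σ / Real.sqrt (4 * Real.pi) : ℝ) : ℂ) *
    ∫ u in Set.Ioi (0 : ℝ),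
      ((u ^ (-(3 : ℝ) / 2) : ℝ) : ℂ) *
        fracDeriv σ (fun t => (t : ℂ) * Complex.exp (-((t : ℂ) ^ 2 / (4 * (u : ℂ))))) t *
        (((Real.exp (-(β * u)) - 1) * euclidHeat n u (x - y) : ℝ) : ℂ)

/-! ### Derivatives of the Gaussian profile -/

lemma gauss_pow_bound (k : ℕ) : ∃ C : ℝ, 0 ≤ C ∧ ∀ v : ℝ, |v| ^ k ≤ C * Real.exp (v ^ 2 / 8) := by
  refine ⟨1 + 8 ^ k * k.factorial, by positivity, fun v => ?_⟩
  have h1 : |v| ^ k ≤ 1 + (v ^ 2) ^ k := by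
    have h : (v ^ 2) ^ k = (|v| ^ k) ^ 2 := by rw [← sq_abs]; ring
    rw [h]; nlinarith [sq_nonneg (|v| ^ k - 1 / 2)]
  have h2 := Real.pow_div_factorial_le_exp (x := v ^ 2 / 8) (by positivity) k
  have h3 : (1 : ℝ) ≤ Real.exp (v ^ 2 / 8) := Real.one_le_exp (by positivity)
  have hk : (0 : ℝ) < k.factorial := by positivity
  rw [div_le_iff₀ hk, div_pow, div_le_iff₀ (by positivity)] at h2
  linarith

lemma gauss_poly_bound (P : Polynomial ℂ) :
    ∃ C : ℝ, 0 ≤ C ∧ ∀ v : ℝ, ‖P.eval (v : ℂ)‖ ≤ C * Real.exp (v ^ 2 / 8) := by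
  induction P using Polynomial.induction_on' with
  | add p q hp hq =>
    obtain ⟨C, hC, h⟩ := hp
    obtain ⟨D, hD, h'⟩ := hq
    refine ⟨C + D, by positivity, fun v => ?_⟩
    rw [Polynomial.eval_add]
    refine (norm_add_le _ _).trans ?_
    rw [add_mul]
    exact add_le_add (h v) (h' v)
  | monomial k a =>
    obtain ⟨C, hC, h⟩ := gauss_pow_bound k
    refine ⟨‖a‖ * C, by positivity, fun v => ?_⟩
    rw [Polynomial.eval_monomial, norm_mul, norm_pow, Complex.norm_real, Real.norm_eq_abs, mul_assoc]
    exact mul_le_mul_of_nonneg_left (h v) (norm_nonneg a)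

/-- Every derivative of `v ↦ v e^{-v²/4}` is a polynomial times the same Gaussian. -/
lemma iteratedDeriv_gauss (m : ℕ) : ∃ P : Polynomial ℂ,
    iteratedDeriv m (fun v : ℝ => (v : ℂ) * Complex.exp (-((v : ℂ) ^ 2 / 4))) =
      fun v : ℝ => P.eval (v : ℂ) * Complex.exp (-((v : ℂ) ^ 2 / 4)) := by
  induction m with
  | zero => exact ⟨Polynomial.X, by simp⟩
  | succ m ih =>
    obtain ⟨P, hP⟩ := ih
    refine ⟨P.derivative - P * (Polynomial.C (1 / 2) * Polynomial.X), ?_⟩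
    rw [iteratedDeriv_succ, hP]
    funext v
    have h1 : HasDerivAt (fun z : ℂ => P.eval z * Complex.exp (-(z ^ 2 / 4)))
        (P.derivative.eval (v : ℂ) * Complex.exp (-((v : ℂ) ^ 2 / 4)) +
          P.eval (v : ℂ) * (Complex.exp (-((v : ℂ) ^ 2 / 4)) * (-((2 : ℕ) * (v : ℂ) ^ (2 - 1) / 4))))
        (v : ℂ) :=
      (P.hasDerivAt (v : ℂ)).mul (((hasDerivAt_pow 2 (v : ℂ)).div_const 4).neg.cexp)
    rw [h1.comp_ofReal.deriv]
    simp
    ring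

/-- The scaling `t e^{-t²/(4u)} = √u G(t/√u)` with `G(v) = v e^{-v²/4}` yields the bound on
derivatives; half of the Gaussian decay absorbs the polynomial factor. -/
lemma iteratedDeriv_bound (m : ℕ) : ∃ C : ℝ, 0 ≤ C ∧ ∀ u : ℝ, 0 < u → ∀ t : ℝ,
    ‖iteratedDeriv m (fun t : ℝ => (t : ℂ) * Complex.exp (-((t : ℂ) ^ 2 / (4 * (u : ℂ))))) t‖ ≤
      C * u ^ ((1 - (m : ℝ)) / 2) * Real.exp (-(1 / (8 * u)) * t ^ 2) := by
  obtain ⟨P, hP⟩ := iteratedDeriv_gauss m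
  obtain ⟨C, hC, hPC⟩ := gauss_poly_bound P
  refine ⟨C, hC, fun u hu t => ?_⟩
  set c : ℝ := (Real.sqrt u)⁻¹ with hc
  have hs : 0 < Real.sqrt u := Real.sqrt_pos.2 hu
  have hs2 : Real.sqrt u ^ 2 = u := Real.sq_sqrt hu.le
  have hc2 : c ^ 2 = 1 / u := by rw [hc, inv_pow, hs2, one_div]
  have hc0 : 0 < c := inv_pos.2 hs
  have hF : (fun t : ℝ => (t : ℂ) * Complex.exp (-((t : ℂ) ^ 2 / (4 * (u : ℂ))))) =
      fun t : ℝ => ((Real.sqrt u : ℝ) : ℂ) *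
        (fun v : ℝ => (v : ℂ) * Complex.exp (-((v : ℂ) ^ 2 / 4))) (c * t) := by
    funext t
    have e1 : ((Real.sqrt u : ℝ) : ℂ) * (((c * t : ℝ)) : ℂ) = t := by
      rw [← Complex.ofReal_mul, hc, mul_inv_cancel_left₀ hs.ne']
    have e2 : (((c * t : ℝ)) : ℂ) ^ 2 / 4 = (t : ℂ) ^ 2 / (4 * (u : ℂ)) := by
      rw [← Complex.ofReal_pow, mul_pow, hc2]
      push_cast
      have : (u : ℂ) ≠ 0 := by exact_mod_cast hu.ne'
      field_simp
    simp only []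
    rw [← mul_assoc, e1, e2]
  have hsm : ContDiff ℝ m (fun v : ℝ => (v : ℂ) * Complex.exp (-((v : ℂ) ^ 2 / 4))) := by
    have h0 : ContDiff ℝ m (fun v : ℝ => (v : ℂ)) := Complex.ofRealCLM.contDiff
    exact h0.mul ((h0.pow 2).div_const 4).neg.cexp
  rw [hF, iteratedDeriv_const_mul_field, iteratedDeriv_comp_const_smul hsm c, hP]
  have hexp : ‖Complex.exp (-(((c * t : ℝ) : ℂ) ^ 2 / 4))‖ = Real.exp (-((c * t) ^ 2 / 4)) := by
    rw [← Complex.norm_of_nonneg (Real.exp_pos (-((c * t) ^ 2 / 4))).le]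
    push_cast; rfl
  simp only []
  rw [norm_mul, norm_smul, norm_mul, hexp, Complex.norm_of_nonneg hs.le, norm_pow,
    Real.norm_of_nonneg hc0.le]
  have hpow : Real.sqrt u * c ^ m = u ^ ((1 - (m : ℝ)) / 2) := by
    rw [hc, Real.sqrt_eq_rpow, ← Real.rpow_neg hu.le, ← Real.rpow_natCast, ← Real.rpow_mul hu.le,
      ← Real.rpow_add hu]
    congr 1; ring
  calc Real.sqrt u * (c ^ m * (‖P.eval ((c * t : ℝ) : ℂ)‖ * Real.exp (-((c * t) ^ 2 / 4))))
      ≤ Real.sqrt u * (c ^ m * ((C * Real.exp ((c * t) ^ 2 / 8)) * Real.exp (-((c * t) ^ 2 / 4)))) := by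
        gcongr; exact hPC _
    _ = C * (Real.sqrt u * c ^ m) * (Real.exp ((c * t) ^ 2 / 8) * Real.exp (-((c * t) ^ 2 / 4))) := by
        ring
    _ = _ := by
        rw [hpow, ← Real.exp_add]
        congr 2
        rw [mul_pow, hc2]; field_simp; ring

/-! ### The fractional derivative -/

lemma sub_mIdx_pos (σ : ℝ) : 0 < (mIdx σ : ℝ) - σ := by
  have := Nat.lt_floor_add_one σ
  rw [mIdx]; push_cast; linarith

/-- The Gaussian bound for the derivative of order `mIdx σ` survives the fractional integral, since
`(t + s)² ≥ t² + s²` separates the variables; scaling gives the power of `u`. -/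
lemma fracDeriv_bound (σ : ℝ) : ∃ C : ℝ, 0 ≤ C ∧ ∀ u : ℝ, 0 < u → ∀ t : ℝ, 0 < t →
    ‖fracDeriv σ (fun t => (t : ℂ) * Complex.exp (-((t : ℂ) ^ 2 / (4 * (u : ℂ))))) t‖ ≤
      C * u ^ ((1 - σ) / 2) * Real.exp (-(t ^ 2 / (8 * u))) := by
  obtain ⟨C, hC, hb⟩ := iteratedDeriv_bound (mIdx σ)
  have ha := sub_mIdx_pos σ
  set a : ℝ := (mIdx σ : ℝ) - σ with hadef
  set K : ℂ := Complex.exp (-(Complex.I * (Real.pi : ℂ) * (a : ℂ))) / Complex.Gamma (a : ℂ) with hK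
  refine ⟨‖K‖ * C * (8 ^ (a / 2) * (1 / 2) * Real.Gamma (a / 2)), ?_, fun u hu t ht => ?_⟩
  · have := Real.Gamma_pos_of_pos (half_pos ha)
    positivity
  have hbu : 0 < 1 / (8 * u) := by positivity
  set D : ℝ := C * u ^ ((1 - (mIdx σ : ℝ)) / 2) * Real.exp (-(t ^ 2 / (8 * u))) with hD
  have hint : IntegrableOn (fun s : ℝ => D * (s ^ (a - 1) * Real.exp (-(1 / (8 * u)) * s ^ 2)))
      (Set.Ioi 0) :=
    (integrableOn_rpow_mul_exp_neg_mul_sq hbu (by linarith)).const_mul D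
  have hval : ∫ s in Set.Ioi (0 : ℝ), s ^ (a - 1) * Real.exp (-(1 / (8 * u)) * s ^ 2) =
      u ^ (a / 2) * (8 ^ (a / 2) * (1 / 2) * Real.Gamma (a / 2)) := by
    have := integral_rpow_mul_exp_neg_mul_rpow (p := 2) (q := a - 1) (b := 1 / (8 * u)) two_pos
      (by linarith) hbu
    simp only [Real.rpow_two] at this
    rw [this, one_div, Real.inv_rpow (by positivity), ← Real.rpow_neg (by positivity)]
    rw [Real.mul_rpow (by norm_num) hu.le]
    ring_nf
  have hmain : ‖∫ s in Set.Ioi (0 : ℝ), iteratedDeriv (mIdx σ)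
      (fun t : ℝ => (t : ℂ) * Complex.exp (-((t : ℂ) ^ 2 / (4 * (u : ℂ))))) (t + s) *
        ((s ^ (a - 1) : ℝ) : ℂ)‖ ≤
      ∫ s in Set.Ioi (0 : ℝ), D * (s ^ (a - 1) * Real.exp (-(1 / (8 * u)) * s ^ 2)) := by
    refine norm_integral_le_of_norm_le hint ?_
    refine (ae_restrict_iff' measurableSet_Ioi).2 (Filter.Eventually.of_forall fun s hs => ?_)
    have hs : 0 < s := hs
    rw [norm_mul, Complex.norm_of_nonneg (by positivity)]
    have h1 := hb u hu (t + s)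
    have h2 : Real.exp (-(1 / (8 * u)) * (t + s) ^ 2) ≤
        Real.exp (-(t ^ 2 / (8 * u))) * Real.exp (-(1 / (8 * u)) * s ^ 2) := by
      rw [← Real.exp_add]
      apply Real.exp_le_exp.2
      have : -(t ^ 2 / (8 * u)) + -(1 / (8 * u)) * s ^ 2 - (-(1 / (8 * u)) * (t + s) ^ 2) =
        (1 / (8 * u)) * (2 * t * s) := by ring
      have h3 : 0 ≤ (1 / (8 * u)) * (2 * t * s) := by positivity
      linarith
    calc _ ≤ (C * u ^ ((1 - (mIdx σ : ℝ)) / 2) *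
          (Real.exp (-(t ^ 2 / (8 * u))) * Real.exp (-(1 / (8 * u)) * s ^ 2))) * s ^ (a - 1) := by
          refine mul_le_mul_of_nonneg_right (h1.trans ?_) (by positivity)
          exact mul_le_mul_of_nonneg_left h2 (by positivity)
      _ = _ := by rw [hD]; ring
  rw [integral_const_mul, hval] at hmain
  rw [fracDeriv, ← hadef, ← hK, norm_mul]
  refine (mul_le_mul_of_nonneg_left hmain (norm_nonneg K)).trans_eq ?_
  have hpow : u ^ ((1 - σ) / 2) = u ^ ((1 - (mIdx σ : ℝ)) / 2) * u ^ (a / 2) := by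
    rw [← Real.rpow_add hu, hadef]; congr 1; ring
  rw [hpow, hD]; ring

/-! ### The kernel -/

/-- The integral is reduced to a Gamma integral by the substitution `u ↦ 1/u`. -/
lemma inv_gamma_integral {p A : ℝ} (hp : 0 < p) (hA : 0 < A) :
    IntegrableOn (fun u : ℝ => u ^ (-p - 1) * Real.exp (-(A / u))) (Set.Ioi 0) ∧
    ∫ u in Set.Ioi (0 : ℝ), u ^ (-p - 1) * Real.exp (-(A / u)) = A ^ (-p) * Real.Gamma p := by
  have hpt : ∀ u ∈ Set.Ioi (0 : ℝ), (|(-1 : ℝ)| * u ^ ((-1 : ℝ) - 1)) •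
      ((fun v : ℝ => v ^ (p - 1) * Real.exp (-A * v ^ (1 : ℝ))) (u ^ (-1 : ℝ))) =
      u ^ (-p - 1) * Real.exp (-(A / u)) := by
    intro u hu
    have hu : 0 < u := hu
    simp only [abs_neg, abs_one, one_mul, smul_eq_mul, Real.rpow_one]
    rw [← mul_assoc, ← Real.rpow_mul hu.le, ← Real.rpow_add hu, Real.rpow_neg_one]
    congr 2
    · ring
    · ring
  constructor
  · refine ((integrableOn_Ioi_comp_rpow_iff _ (p := -1) (by norm_num)).2
      (integrableOn_rpow_mul_exp_neg_mul_rpow (s := p - 1) (p := 1) (b := A) (by linarith) one_pos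
        hA)).congr_fun hpt measurableSet_Ioi
  · rw [← setIntegral_congr_fun measurableSet_Ioi hpt,
      integral_comp_rpow_Ioi (fun v : ℝ => v ^ (p - 1) * Real.exp (-A * v ^ (1 : ℝ)))
        (p := -1) (by norm_num),
      integral_rpow_mul_exp_neg_mul_rpow one_pos (by linarith) hA]
    simp

lemma one_sub_exp_bound {v : ℝ} (hv : 0 ≤ v) : |Real.exp (-v) - 1| ≤ v ^ ((1 : ℝ) / 4) := by
  have h1 : Real.exp (-v) ≤ 1 := Real.exp_le_one_iff.2 (by linarith)
  rw [abs_of_nonpos (by linarith)]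
  rcases le_total v 1 with h | h
  · have h2 := Real.add_one_le_exp (-v)
    have h3 := Real.rpow_le_rpow_of_exponent_ge' hv h (by norm_num) (by norm_num : (1 : ℝ) / 4 ≤ 1)
    rw [Real.rpow_one] at h3
    linarith
  · have h2 := Real.exp_pos (-v)
    have h3 := Real.one_le_rpow h (by norm_num : (0 : ℝ) ≤ 1 / 4)
    linarith

/-- The bound `|e^{-βu} - 1| ≤ (βu)^{1/4}` lowers the power of `t² + |x-y|²` by `1/4`, which
becomes the gain of `1/2` in the power of `|x-y|` after integration in `t`. -/
lemma HcalKernel_pointwise (n : ℕ) (hn : 1 ≤ n) (σ β : ℝ) (hσ : 0 < σ) (hβ : 0 ≤ β) :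
    ∃ C : ℝ, 0 ≤ C ∧ ∀ x y : EuclideanSpace ℝ (Fin n), ∀ t : ℝ, 0 < t →
      ‖HcalKernel n β σ x y t‖ ≤
        C * t ^ σ * (t ^ 2 + ‖x - y‖ ^ 2) ^ (-((σ + n) / 2 - 1 / 4)) := by
  obtain ⟨C, hC, hb⟩ := fracDeriv_bound σ
  have hn' : (1 : ℝ) ≤ n := by exact_mod_cast hn
  set p : ℝ := (σ + n) / 2 - 1 / 4 with hp
  have hp0 : 0 < p := by rw [hp]; linarith
  set M : ℝ := C * β ^ ((1 : ℝ) / 4) * (4 * Real.pi) ^ (-(n : ℝ) / 2) with hM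
  have hM0 : 0 ≤ M := by positivity
  have hΓ := Real.Gamma_pos_of_pos hp0
  refine ⟨1 / Real.sqrt (4 * Real.pi) * (M * (8 ^ p * Real.Gamma p)), by positivity,
    fun x y t ht => ?_⟩
  set r : ℝ := ‖x - y‖ with hr
  set A : ℝ := (t ^ 2 + r ^ 2) / 8 with hA
  have hA0 : 0 < A := by positivity
  obtain ⟨hi, hv⟩ := inv_gamma_integral hp0 hA0
  have hmain : ‖∫ u in Set.Ioi (0 : ℝ),
      ((u ^ (-(3 : ℝ) / 2) : ℝ) : ℂ) *
        fracDeriv σ (fun t => (t : ℂ) * Complex.exp (-((t : ℂ) ^ 2 / (4 * (u : ℂ))))) t *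
        (((Real.exp (-(β * u)) - 1) * euclidHeat n u (x - y) : ℝ) : ℂ)‖ ≤
      ∫ u in Set.Ioi (0 : ℝ), M * (u ^ (-p - 1) * Real.exp (-(A / u))) := by
    refine norm_integral_le_of_norm_le (hi.const_mul M) ?_
    refine (ae_restrict_iff' measurableSet_Ioi).2 (Filter.Eventually.of_forall fun u hu => ?_)
    have hu : 0 < u := hu
    rw [norm_mul, norm_mul, Complex.norm_of_nonneg (by positivity), Complex.norm_real, norm_mul,
      Real.norm_eq_abs, euclidHeat, ← hr, Real.norm_of_nonneg (by positivity)]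
    have h1 := hb u hu t ht
    have h2 := one_sub_exp_bound (mul_nonneg hβ hu.le)
    rw [Real.mul_rpow hβ hu.le] at h2
    have h3 : Real.exp (-r ^ 2 / (4 * u)) ≤ Real.exp (-(r ^ 2 / (8 * u))) := by
      apply Real.exp_le_exp.2
      rw [neg_div, neg_le_neg_iff]
      gcongr
      norm_num
    calc _ ≤ u ^ (-(3 : ℝ) / 2) * (C * u ^ ((1 - σ) / 2) * Real.exp (-(t ^ 2 / (8 * u)))) *
          ((β ^ ((1 : ℝ) / 4) * u ^ ((1 : ℝ) / 4)) *
            ((4 * Real.pi * u) ^ (-(n : ℝ) / 2) * Real.exp (-(r ^ 2 / (8 * u))))) := by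
          gcongr
      _ = M * ((u ^ (-(3 : ℝ) / 2) * u ^ ((1 - σ) / 2) * u ^ ((1 : ℝ) / 4) * u ^ (-(n : ℝ) / 2)) *
            (Real.exp (-(t ^ 2 / (8 * u))) * Real.exp (-(r ^ 2 / (8 * u))))) := by
          rw [hM, Real.mul_rpow (by positivity) hu.le]; ring
      _ = _ := by
          rw [← Real.exp_add, ← Real.rpow_add hu, ← Real.rpow_add hu, ← Real.rpow_add hu]
          congr 3
          · rw [hp]; ring
          · rw [hA]; field_simp; ring
  rw [integral_const_mul, hv] at hmain
  rw [HcalKernel, norm_mul, Complex.norm_of_nonneg (by positivity)]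
  refine (mul_le_mul_of_nonneg_left hmain (by positivity)).trans_eq ?_
  have h8 : A ^ (-p) = (t ^ 2 + r ^ 2) ^ (-p) * 8 ^ p := by
    rw [hA, Real.div_rpow (by positivity) (by norm_num), Real.rpow_neg (by norm_num : (0 : ℝ) ≤ 8),
      div_inv_eq_mul]
  rw [h8]; ring

/-! ### The integral in `t` -/

lemma radial_integrable {σ q : ℝ} (hσ : 0 < σ) (hq : σ < q) :
    IntegrableOn (fun v : ℝ => v ^ (2 * σ - 1) * (v ^ 2 + 1) ^ (-q)) (Set.Ioi 0) := by
  have hmeas : Measurable (fun v : ℝ => v ^ (2 * σ - 1) * (v ^ 2 + 1) ^ (-q)) := by fun_prop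
  rw [← Set.Ioc_union_Ioi_eq_Ioi zero_le_one]
  refine IntegrableOn.union ?_ ?_
  · have h := (intervalIntegrable_iff_integrableOn_Ioc_of_le zero_le_one).1
      (intervalIntegral.intervalIntegrable_rpow' (a := 0) (b := 1) (r := 2 * σ - 1) (by linarith))
    refine Integrable.mono' h hmeas.aestronglyMeasurable ?_
    refine (ae_restrict_iff' measurableSet_Ioc).2 (Filter.Eventually.of_forall fun v hv => ?_)
    have hv0 : 0 < v := hv.1
    rw [Real.norm_of_nonneg (by positivity)]
    exact mul_le_of_le_one_right (by positivity)
      (Real.rpow_le_one_of_one_le_of_nonpos (by nlinarith) (by linarith))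
  · have h := integrableOn_Ioi_rpow_of_lt (a := 2 * σ - 1 - 2 * q) (c := 1) (by linarith) one_pos
    refine Integrable.mono' h hmeas.aestronglyMeasurable ?_
    refine (ae_restrict_iff' measurableSet_Ioi).2 (Filter.Eventually.of_forall fun v hv => ?_)
    have hv0 : 0 < v := zero_lt_one.trans hv
    rw [Real.norm_of_nonneg (by positivity)]
    have h2 : (v ^ 2 + 1) ^ (-q) ≤ (v ^ 2) ^ (-q) :=
      Real.rpow_le_rpow_of_nonpos (by positivity) (by linarith) (by linarith)
    refine (mul_le_mul_of_nonneg_left h2 (by positivity)).trans_eq ?_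
    rw [← Real.rpow_two, ← Real.rpow_mul hv0.le, ← Real.rpow_add hv0]
    congr 1; ring

/-- The substitution `t = r v`. -/
lemma radial_scaling {σ q r : ℝ} (hσ : 0 < σ) (hq : σ < q) (hr : 0 < r) :
    IntegrableOn (fun t : ℝ => t ^ (2 * σ - 1) * (t ^ 2 + r ^ 2) ^ (-q)) (Set.Ioi 0) ∧
    ∫ t in Set.Ioi (0 : ℝ), t ^ (2 * σ - 1) * (t ^ 2 + r ^ 2) ^ (-q) =
      r ^ (2 * σ - 2 * q) * ∫ v in Set.Ioi (0 : ℝ), v ^ (2 * σ - 1) * (v ^ 2 + 1) ^ (-q) := by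
  have hpt : ∀ v ∈ Set.Ioi (0 : ℝ),
      r ^ (2 * σ - 1 - 2 * q) * (v ^ (2 * σ - 1) * (v ^ 2 + 1) ^ (-q)) =
      (fun t : ℝ => t ^ (2 * σ - 1) * (t ^ 2 + r ^ 2) ^ (-q)) (r * v) := by
    intro v hv
    have hv : 0 < v := hv
    simp only []
    rw [show (r * v) ^ 2 + r ^ 2 = r ^ 2 * (v ^ 2 + 1) by ring, Real.mul_rpow hr.le hv.le,
      Real.mul_rpow (by positivity) (by positivity), ← Real.rpow_two r, ← Real.rpow_mul hr.le,
      show 2 * σ - 1 - 2 * q = (2 * σ - 1) + 2 * (-q) by ring, Real.rpow_add hr]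
    ring
  constructor
  · have h := integrableOn_Ioi_comp_mul_left_iff
      (fun t : ℝ => t ^ (2 * σ - 1) * (t ^ 2 + r ^ 2) ^ (-q)) 0 hr
    rw [mul_zero] at h
    have h' : IntegrableOn (fun v : ℝ =>
        r ^ (2 * σ - 1 - 2 * q) * (v ^ (2 * σ - 1) * (v ^ 2 + 1) ^ (-q))) (Set.Ioi 0) :=
      (radial_integrable hσ hq).const_mul _
    exact h.1 (h'.congr_fun hpt measurableSet_Ioi)
  · have h := integral_comp_mul_left_Ioi'
      (fun t : ℝ => t ^ (2 * σ - 1) * (t ^ 2 + r ^ 2) ^ (-q)) 0 hr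
    rw [mul_zero] at h
    rw [← h, ← setIntegral_congr_fun measurableSet_Ioi hpt, integral_const_mul, smul_eq_mul,
      ← mul_assoc]
    congr 1
    rw [mul_comm, ← Real.rpow_add_one hr.ne']
    congr 1; ring

/-! ### The square function estimate -/

/-- For `n ≥ 1`, `σ > 0` and `β ≥ 0` there is `C > 0` such that for all `(x,y)` in the region
`Ñ = {(x,y) : |x-y| < 2n(n+3)/(1+|x|+|y|)}` with `x ≠ y`,
`(∫_0^∞ |𝓗_{β,σ}(x,y,t)|² dt/t)^{1/2} ≤ C(1+|x|^{1/2})/|x-y|^{n-1/2}`. -/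
theorem HcalKernel_local_bound (n : ℕ) (hn : 1 ≤ n) (σ β : ℝ) (hσ : 0 < σ) (hβ : 0 ≤ β) :
    ∃ C > 0, ∀ x y : EuclideanSpace ℝ (Fin n),
      ‖x - y‖ < 2 * n * (n + 3) / (1 + ‖x‖ + ‖y‖) → x ≠ y →
      (∫ t in Set.Ioi (0 : ℝ), ‖HcalKernel n β σ x y t‖ ^ 2 / t) ^ ((1 : ℝ) / 2) ≤
        C * (1 + ‖x‖ ^ ((1 : ℝ) / 2)) / ‖x - y‖ ^ ((n : ℝ) - 1 / 2) := by
  obtain ⟨C, hC, hb⟩ := HcalKernel_pointwise n hn σ β hσ hβ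
  have hn' : (1 : ℝ) ≤ n := by exact_mod_cast hn
  set q : ℝ := σ + n - 1 / 2 with hq
  have hq0 : σ < q := by rw [hq]; linarith
  set J : ℝ := ∫ v in Set.Ioi (0 : ℝ), v ^ (2 * σ - 1) * (v ^ 2 + 1) ^ (-q) with hJ
  have hJ0 : 0 ≤ J := setIntegral_nonneg measurableSet_Ioi fun v hv => by
    have hv : 0 < v := hv
    positivity
  refine ⟨C * J ^ ((1 : ℝ) / 2) + 1, by positivity, fun x y _ hxy => ?_⟩
  have hr : 0 < ‖x - y‖ := norm_pos_iff.2 (sub_ne_zero.2 hxy)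
  set r : ℝ := ‖x - y‖ with hrdef
  obtain ⟨hi, hv⟩ := radial_scaling hσ hq0 hr
  have hle : ∫ t in Set.Ioi (0 : ℝ), ‖HcalKernel n β σ x y t‖ ^ 2 / t ≤
      ∫ t in Set.Ioi (0 : ℝ), C ^ 2 * (t ^ (2 * σ - 1) * (t ^ 2 + r ^ 2) ^ (-q)) := by
    refine integral_mono_of_nonneg ?_ (hi.const_mul _) ?_
    · refine (ae_restrict_iff' measurableSet_Ioi).2 (Filter.Eventually.of_forall fun t ht => ?_)
      have ht : 0 < t := ht
      simp only [Pi.zero_apply]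
      positivity
    · refine (ae_restrict_iff' measurableSet_Ioi).2 (Filter.Eventually.of_forall fun t ht => ?_)
      have ht : 0 < t := ht
      have hA : 0 < t ^ 2 + r ^ 2 := by positivity
      have h1 := pow_le_pow_left₀ (norm_nonneg _) (hb x y t ht) 2
      refine (div_le_div_of_nonneg_right h1 ht.le).trans_eq ?_
      simp only []
      rw [← hrdef, mul_pow, mul_pow, ← Real.rpow_two (t ^ σ), ← Real.rpow_mul ht.le,
        ← Real.rpow_two (_ ^ (-((σ + n) / 2 - 1 / 4))), ← Real.rpow_mul hA.le,
        Real.rpow_sub_one ht.ne', hq]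
      ring_nf
  rw [integral_const_mul, hv] at hle
  have h0 : 0 ≤ ∫ t in Set.Ioi (0 : ℝ), ‖HcalKernel n β σ x y t‖ ^ 2 / t :=
    setIntegral_nonneg measurableSet_Ioi fun t ht => by
      have ht : 0 < t := ht
      positivity
  have h2 := Real.rpow_le_rpow h0 hle (by norm_num : (0 : ℝ) ≤ 1 / 2)
  have h3 : (C ^ 2 * (r ^ (2 * σ - 2 * q) * J)) ^ ((1 : ℝ) / 2) =
      C * J ^ ((1 : ℝ) / 2) / r ^ ((n : ℝ) - 1 / 2) := by
    rw [Real.mul_rpow (by positivity) (by positivity), Real.mul_rpow (by positivity) hJ0,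
      ← Real.rpow_mul hr.le, ← Real.sqrt_eq_rpow (C ^ 2), Real.sqrt_sq hC,
      show (2 * σ - 2 * q) * (1 / 2) = -((n : ℝ) - 1 / 2) by rw [hq]; ring, Real.rpow_neg hr.le]
    ring
  rw [h3] at h2
  refine h2.trans (div_le_div_of_nonneg_right ?_ (by positivity))
  have hJ' : 0 ≤ C * J ^ ((1 : ℝ) / 2) := by positivity
  have hx : 0 ≤ ‖x‖ ^ ((1 : ℝ) / 2) := by positivity
  nlinarith [mul_nonneg hJ' hx]
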